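/- The length of a closed rectifiable curve on the unit sphere S² equals π times the average, over the uniform measure on unit vectors u, of the number of intersections of the curve with the great circle u^⊥ ∩ S². -/

import Mathlib

open Set MeasureTheory Metric
open scoped RealInnerProductSpace ENNReal

noncomputable section

/-!
By rotation invariance and periodicity, the great circles separating two unit vectors at angle `θ`
have measure `θ / π` times the total. Hence, along a partition of the parameter interval, `π` times
the integral over `u` of the number of sign changes of `⟪γ, u⟫` is the sum of the angles between
consecutive points, times the total measure. Since a sign change forces a zero, and angles dominate
chords, the length is at most the integral geometric side.

Conversely, for almost every `u` every zero of `⟪γ, u⟫` is a crossing, so that sufficiently fine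
partitions detect it as a sign change. By Fatou's lemma the integral geometric side is then at most
the lower limit of the angle sums, which is at most the length because angles and chords agree to
first order.
-/

section Cone

variable {E : Type*} [NormedAddCommGroup E] [NormedSpace ℝ E] {A : Set E}

open scoped Pointwise in
lemma Ioo_smul_image_coe_sphere (hA : ∀ r : ℝ, 0 < r → ∀ v ∈ A, r • v ∈ A) :
    Ioo (0 : ℝ) 1 • (Subtype.val '' {u : sphere (0 : E) 1 | (u : E) ∈ A}) =
      (ball 0 1 ∩ A) \ {0} := by
  ext v
  constructor
  · rintro ⟨r, ⟨hr₀, hr₁⟩, _, ⟨u, hu, rfl⟩, rfl⟩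
    refine ⟨⟨?_, hA r hr₀ u hu⟩, smul_ne_zero hr₀.ne' (ne_zero_of_mem_unit_sphere u)⟩
    simpa [norm_smul, abs_of_pos hr₀] using hr₁
  · rintro ⟨⟨hball, hvA⟩, hv⟩
    have hnorm : 0 < ‖v‖ := norm_pos_iff.2 hv
    refine ⟨‖v‖, ⟨hnorm, by simpa using hball⟩, ‖v‖⁻¹ • v,
      ⟨⟨‖v‖⁻¹ • v, ?_⟩, hA _ (inv_pos.2 hnorm) v hvA, rfl⟩, ?_⟩
    · simp [norm_smul, hnorm.ne']
    · simp [smul_smul, hnorm.ne']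

lemma toSphere_setOf_coe_mem [MeasurableSpace E] [BorelSpace E] (μ : Measure E)
    (hmeas : MeasurableSet A) (hA : ∀ r : ℝ, 0 < r → ∀ v ∈ A, r • v ∈ A) :
    μ.toSphere {u | (u : E) ∈ A} = Module.finrank ℝ E * μ ((ball 0 1 ∩ A) \ {0}) := by
  have hcoe : MeasurableSet {u : sphere (0 : E) 1 | (u : E) ∈ A} := measurable_subtype_coe hmeas
  rw [μ.toSphere_apply' hcoe, Ioo_smul_image_coe_sphere hA]

lemma ae_toSphere_coe_notMem_frontier [FiniteDimensional ℝ E] [MeasurableSpace E] [BorelSpace E]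
    (μ : Measure E) [μ.IsAddHaarMeasure] (K : PointedCone ℝ E) :
    ∀ᵐ u : sphere (0 : E) 1 ∂μ.toSphere, (u : E) ∉ frontier (K : Set E) := by
  have hcone (r : ℝ) (hr : 0 < r) (v : E) (hv : v ∈ frontier (K : Set E)) :
      r • v ∈ frontier (K : Set E) := by
    have hpre : (Homeomorph.smulOfNeZero r hr.ne') ⁻¹' (K : Set E) = K :=
      ext fun v => K.smul_mem_iff hr
    rwa [← hpre, ← Homeomorph.preimage_frontier] at hv
  simp only [ae_iff, not_not]
  rw [toSphere_setOf_coe_mem μ isClosed_frontier.measurableSet hcone,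
    measure_mono_null (fun v hv => hv.1.2) (K.convex.addHaar_frontier μ), mul_zero]

end Cone

section GreatCircle

variable {E : Type*} [NormedAddCommGroup E] [InnerProductSpace ℝ E] {x w : E}

/-- The arclength parametrization of the great circle through the orthonormal vectors `x` and `w`,
starting at `x` in the direction of `w`. -/
def greatCircle (x w : E) (φ : ℝ) : E := Real.cos φ • x + Real.sin φ • w

lemma greatCircle_zero (x w : E) : greatCircle x w 0 = x := by
  simp [greatCircle]

lemma inner_greatCircle (x w v : E) (φ : ℝ) :
    ⟪greatCircle x w φ, v⟫ = Real.cos φ * ⟪x, v⟫ + Real.sin φ * ⟪w, v⟫ := by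
  simp only [greatCircle, inner_add_left, real_inner_smul_left]

lemma inner_greatCircle_greatCircle (hx : ‖x‖ = 1) (hw : ‖w‖ = 1) (hxw : ⟪x, w⟫ = 0) (α β : ℝ) :
    ⟪greatCircle x w α, greatCircle x w β⟫ = Real.cos (α - β) := by
  simp only [greatCircle, inner_add_left, inner_add_right, real_inner_smul_left,
    real_inner_smul_right, real_inner_self_eq_norm_sq, hx, hw, hxw, real_inner_comm x w,
    Real.cos_sub]
  ring

lemma exists_linearIsometryEquiv_greatCircle (hx : ‖x‖ = 1) (hw : ‖w‖ = 1) (hxw : ⟪x, w⟫ = 0)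
    (s : ℝ) :
    ∃ L : E ≃ₗᵢ[ℝ] E, ∀ φ, L (greatCircle x w φ) = greatCircle x w (s - φ) := by
  have hinner := inner_greatCircle_greatCircle hx hw hxw
  have hnorm : ‖greatCircle x w (s / 2)‖ = 1 := by
    rw [norm_eq_sqrt_real_inner, hinner, sub_self, Real.cos_zero, Real.sqrt_one]
  refine ⟨(ℝ ∙ greatCircle x w (s / 2)).reflection, fun φ => ?_⟩
  have hcos : 2 * Real.cos (s / 2 - φ) * Real.cos (s / 2) - Real.cos φ = Real.cos (s - φ) := by
    rw [Real.two_mul_cos_mul_cos, ← Real.cos_neg φ]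
    ring_nf
  have hsin : 2 * Real.cos (s / 2 - φ) * Real.sin (s / 2) - Real.sin φ = Real.sin (s - φ) := by
    rw [mul_right_comm, Real.two_mul_sin_mul_cos]
    ring_nf
  rw [Submodule.reflection_singleton_apply, hnorm, hinner]
  simp only [greatCircle, ← hcos, ← hsin, RCLike.ofReal_one]
  module

lemma norm_sub_cos_angle_smul {y : E} (hx : ‖x‖ = 1) (hy : ‖y‖ = 1) :
    ‖y - Real.cos (InnerProductGeometry.angle x y) • x‖ =
      Real.sin (InnerProductGeometry.angle x y) := by
  rw [← sq_eq_sq₀ (norm_nonneg _) (InnerProductGeometry.sin_angle_nonneg x y), norm_sub_sq_real,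
    norm_smul, mul_pow, hx, hy, real_inner_smul_right, real_inner_comm,
    InnerProductGeometry.inner_eq_cos_angle_of_norm_eq_one hx hy, Real.norm_eq_abs, sq_abs,
    Real.sin_sq]
  ring

lemma exists_greatCircle_angle_eq {y : E} (hx : ‖x‖ = 1) (hy : ‖y‖ = 1)
    (hsin : Real.sin (InnerProductGeometry.angle x y) ≠ 0) :
    ∃ w : E, ‖w‖ = 1 ∧ ⟪x, w⟫ = 0 ∧ greatCircle x w (InnerProductGeometry.angle x y) = y := by
  set θ := InnerProductGeometry.angle x y
  refine ⟨(Real.sin θ)⁻¹ • (y - Real.cos θ • x), ?_, ?_, ?_⟩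
  · have hnorm : ‖y - Real.cos θ • x‖ = Real.sin θ := norm_sub_cos_angle_smul hx hy
    rw [norm_smul, norm_inv, Real.norm_of_nonneg (InnerProductGeometry.sin_angle_nonneg x y),
      hnorm, inv_mul_cancel₀ hsin]
  · rw [real_inner_smul_right, inner_sub_right, real_inner_smul_right, real_inner_self_eq_norm_sq,
      hx, InnerProductGeometry.inner_eq_cos_angle_of_norm_eq_one hx hy]
    ring
  · rw [greatCircle, smul_inv_smul₀ hsin, add_sub_cancel]

end GreatCircle

section Cos

lemma exists_forall_cos_mul_add_sin_mul (a b : ℝ) :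
    ∃ ψ, ∀ φ, Real.cos φ * a + Real.sin φ * b = √(a ^ 2 + b ^ 2) * Real.cos (φ - ψ) := by
  set z : ℂ := ⟨a, b⟩
  have hre : ‖z‖ * Real.cos z.arg = a := Complex.norm_mul_cos_arg z
  have him : ‖z‖ * Real.sin z.arg = b := Complex.norm_mul_sin_arg z
  refine ⟨z.arg, fun φ => ?_⟩
  calc Real.cos φ * a + Real.sin φ * b
      = ‖z‖ * Real.cos (φ - z.arg) := by rw [Real.cos_sub, ← hre, ← him]; ring
    _ = √(a ^ 2 + b ^ 2) * Real.cos (φ - z.arg) := by rw [Complex.norm_eq_sqrt_sq_add_sq]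

lemma setOf_cos_mul_cos_neg_inter_Ioc {θ : ℝ} (hθ₀ : 0 ≤ θ) (hθ : θ ≤ Real.pi) (ψ : ℝ) :
    {φ | Real.cos (φ - ψ) * Real.cos (φ + θ - ψ) < 0} ∩
        Ioc (ψ - Real.pi / 2) (ψ - Real.pi / 2 + Real.pi) =
      Ioo (ψ + Real.pi / 2 - θ) (ψ + Real.pi / 2) := by
  ext φ
  constructor
  · rintro ⟨hneg, hφ₁, hφ₂⟩
    have hleft : 0 ≤ Real.cos (φ - ψ) :=
      Real.cos_nonneg_of_neg_pi_div_two_le_of_le (by linarith) (by linarith)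
    have hright : Real.cos (φ + θ - ψ) < 0 := neg_of_mul_neg_right hneg hleft
    refine ⟨?_, (hφ₂.trans_eq (by ring)).lt_of_ne ?_⟩
    · by_contra! h
      exact hright.not_ge
        (Real.cos_nonneg_of_neg_pi_div_two_le_of_le (by linarith) (by linarith))
    · rintro rfl
      simp at hneg
  · rintro ⟨h₁, h₂⟩
    refine ⟨mem_ofPred_eq ▸ mul_neg_of_pos_of_neg ?_ ?_, by linarith, by linarith⟩
    · exact Real.cos_pos_of_mem_Ioo ⟨by linarith, by linarith⟩
    · exact Real.cos_neg_of_pi_div_two_lt_of_lt (by linarith) (by linarith)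

lemma volume_setOf_cos_mul_cos_neg {θ : ℝ} (hθ₀ : 0 ≤ θ) (hθ : θ ≤ Real.pi) (ψ : ℝ) :
    volume ({φ | Real.cos (φ - ψ) * Real.cos (φ + θ - ψ) < 0} ∩ Ioc 0 Real.pi) =
      ENNReal.ofReal θ := by
  set A := {φ | Real.cos (φ - ψ) * Real.cos (φ + θ - ψ) < 0} with hA
  have hmem (φ : ℝ) : φ ∈ A ↔ Real.cos (φ - ψ) * Real.cos (φ + θ - ψ) < 0 := Iff.rfl
  have hmeas : MeasurableSet A := measurableSet_lt (by fun_prop) (by fun_prop)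
  have hperiod :
      Function.Periodic (fun φ => Real.cos (φ - ψ) * Real.cos (φ + θ - ψ)) Real.pi := fun φ => by
    have hcos (c : ℝ) : Real.cos (φ + Real.pi + c) = -Real.cos (φ + c) := by
      rw [add_right_comm, Real.cos_add_pi]
    simp only [sub_eq_add_neg, add_assoc (φ + Real.pi), add_assoc φ θ, hcos, neg_mul_neg]
  have hinv : ∀ g : AddSubgroup.zmultiples Real.pi, (g +ᵥ ·) ⁻¹' A = A :=
    fun g => ext fun φ => by rw [mem_preimage, hmem, hmem, hperiod.map_vadd_zmultiples g φ]
  have hshift := (isAddFundamentalDomain_Ioc Real.pi_pos 0).measure_set_eq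
    (isAddFundamentalDomain_Ioc Real.pi_pos (ψ - Real.pi / 2)) hmeas hinv
  rw [zero_add] at hshift
  rw [hshift, hA, setOf_cos_mul_cos_neg_inter_Ioc hθ₀ hθ, Real.volume_Ioo]
  ring_nf

end Cos

section InnerDual

variable {E : Type*} [NormedAddCommGroup E] [InnerProductSpace ℝ E] [CompleteSpace E]

lemma mem_frontier_innerDual {S : Set E} {x u : E} (hu : u ∈ ProperCone.innerDual S) (hx : x ∈ S)
    (hx₀ : x ≠ 0) (hxu : ⟪x, u⟫ = 0) : u ∈ frontier (ProperCone.innerDual S : Set E) := by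
  refine ⟨subset_closure hu, fun hint => ?_⟩
  have hsub : (ProperCone.innerDual S : Set E) ⊆ innerSL ℝ x ⁻¹' Ici 0 := fun v hv => hv hx
  have hopen : IsOpenMap (innerSL ℝ x) :=
    (innerSL ℝ x).isOpenMap_of_ne_zero fun h => hx₀ (inner_self_eq_zero.1 (DFunLike.congr_fun h x))
  have hmem := interior_mono hsub hint
  rw [← hopen.preimage_interior_eq_interior_preimage (innerSL ℝ x).continuous, interior_Ici] at hmem
  exact hmem.ne' hxu

end InnerDual

section Generic

open Filter Topology

variable {E : Type*} [NormedAddCommGroup E] [InnerProductSpace ℝ E] [FiniteDimensional ℝ E]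
  [MeasurableSpace E] [BorelSpace E] (μ : Measure E) [μ.IsAddHaarMeasure]

lemma ae_toSphere_inner_ne_zero {x : E} (hx : x ≠ 0) :
    ∀ᵐ u : sphere (0 : E) 1 ∂μ.toSphere, ⟪x, (u : E)⟫ ≠ 0 := by
  filter_upwards [ae_toSphere_coe_notMem_frontier μ (ProperCone.innerDual {x})] with u hu hxu
  exact hu (mem_frontier_innerDual (fun _ h => h ▸ hxu.ge) rfl hx hxu)

/-- A great circle meeting the curve from one side only is, up to a sign, a boundary point of the
dual cone of a piece of the curve, and a basis of the topology provides countably many pieces. -/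
lemma ae_toSphere_forall_frequently_inner_neg {X : Type*} [TopologicalSpace X]
    [SecondCountableTopology X] {γ : X → E} {s : Set X} (hγ : ∀ t ∈ s, γ t ≠ 0) :
    ∀ᵐ u : sphere (0 : E) 1 ∂μ.toSphere,
      ∀ t ∈ s, ⟪γ t, (u : E)⟫ = 0 → ∃ᶠ r in 𝓝[s] t, ⟪γ r, (u : E)⟫ < 0 := by
  have hgeneric : ∀ᵐ u : sphere (0 : E) 1 ∂μ.toSphere, ∀ U ∈ TopologicalSpace.countableBasis X,
      (u : E) ∉ frontier (ProperCone.innerDual (γ '' (U ∩ s)) : Set E) :=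
    (ae_ball_iff (TopologicalSpace.countable_countableBasis X)).2 fun U _ =>
      ae_toSphere_coe_notMem_frontier μ (ProperCone.innerDual (γ '' (U ∩ s)))
  filter_upwards [hgeneric] with u hu t ht hzero
  by_contra hev
  simp only [not_frequently, not_lt, eventually_nhdsWithin_iff] at hev
  obtain ⟨U, hU, htU, hsub⟩ :=
    (TopologicalSpace.isBasis_countableBasis X).mem_nhds_iff.1 hev
  refine hu U hU (mem_frontier_innerDual ?_ (mem_image_of_mem γ ⟨htU, ht⟩) (hγ t ht) hzero)
  rintro _ ⟨r, ⟨hrU, hrs⟩, rfl⟩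
  exact hsub hrU hrs

lemma ae_toSphere_forall_frequently_inner_pos {X : Type*} [TopologicalSpace X]
    [SecondCountableTopology X] {γ : X → E} {s : Set X} (hγ : ∀ t ∈ s, γ t ≠ 0) :
    ∀ᵐ u : sphere (0 : E) 1 ∂μ.toSphere,
      ∀ t ∈ s, ⟪γ t, (u : E)⟫ = 0 → ∃ᶠ r in 𝓝[s] t, 0 < ⟪γ r, (u : E)⟫ := by
  simpa using ae_toSphere_forall_frequently_inner_neg μ (γ := -γ) (s := s) (by simpa using hγ)

end Generic

section Separators

variable {E : Type*} [NormedAddCommGroup E] [InnerProductSpace ℝ E]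

/-- The unit vectors `u` for which the great circle orthogonal to `u` separates `x` from `y`. -/
def separators (x y : E) : Set (sphere (0 : E) 1) := {u | ⟪x, (u : E)⟫ * ⟪y, (u : E)⟫ < 0}

lemma separators_comm (x y : E) : separators x y = separators y x := by
  simp only [separators, mul_comm]

lemma separators_smul_of_pos (x : E) {r : ℝ} (hr : 0 < r) : separators x (r • x) = ∅ := by
  refine eq_empty_of_forall_notMem fun u hu => ?_
  rw [separators, mem_ofPred_eq, real_inner_smul_left, mul_left_comm] at hu
  exact hu.not_ge (mul_nonneg hr.le (mul_self_nonneg _))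

lemma volume_setOf_mem_separators_greatCircle {θ : ℝ} (hθ₀ : 0 ≤ θ) (hθ : θ ≤ Real.pi)
    {x w : E} {u : sphere (0 : E) 1} (hxu : ⟪x, (u : E)⟫ ≠ 0) :
    volume ({φ | u ∈ separators (greatCircle x w φ) (greatCircle x w (φ + θ))} ∩ Ioc 0 Real.pi) =
      ENNReal.ofReal θ := by
  obtain ⟨ψ, hψ⟩ := exists_forall_cos_mul_add_sin_mul ⟪x, (u : E)⟫ ⟪w, (u : E)⟫
  have hR : 0 < √(⟪x, (u : E)⟫ ^ 2 + ⟪w, (u : E)⟫ ^ 2) := by positivity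
  rw [← volume_setOf_cos_mul_cos_neg hθ₀ hθ ψ]
  congr 2 with φ
  simp only [separators, mem_ofPred_eq, inner_greatCircle, hψ]
  rw [mul_mul_mul_comm, ← mul_zero (_ * _), mul_lt_mul_iff_right₀ (mul_pos hR hR), mul_zero]

variable [MeasurableSpace E] [BorelSpace E]

lemma measurableSet_separators (x y : E) : MeasurableSet (separators x y) :=
  measurableSet_lt (by fun_prop) (by fun_prop)

variable [FiniteDimensional ℝ E] {x y w : E}

lemma toSphere_separators (x y : E) :
    (volume : Measure E).toSphere (separators x y) = Module.finrank ℝ E *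
      volume ((ball 0 1 ∩ {v : E | ⟪x, v⟫ * ⟪y, v⟫ < 0}) \ {0}) := by
  refine toSphere_setOf_coe_mem (A := {v : E | ⟪x, v⟫ * ⟪y, v⟫ < 0}) volume
    (measurableSet_lt (by fun_prop) (by fun_prop)) fun r hr v hv => ?_
  rw [mem_ofPred_eq, real_inner_smul_right, real_inner_smul_right, mul_mul_mul_comm]
  exact mul_neg_of_pos_of_neg (mul_pos hr hr) hv

lemma toSphere_separators_map (L : E ≃ₗᵢ[ℝ] E) (x y : E) :
    (volume : Measure E).toSphere (separators (L x) (L y)) =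
      (volume : Measure E).toSphere (separators x y) := by
  rw [toSphere_separators, toSphere_separators,
    ← L.measurePreserving.measure_preimage_emb L.toHomeomorph.measurableEmbedding]
  congr 2
  ext v
  simp [L.inner_map_map]

lemma toSphere_separators_greatCircle_add (hx : ‖x‖ = 1) (hw : ‖w‖ = 1) (hxw : ⟪x, w⟫ = 0)
    (φ θ : ℝ) :
    (volume : Measure E).toSphere (separators (greatCircle x w φ) (greatCircle x w (φ + θ))) =
      (volume : Measure E).toSphere (separators x (greatCircle x w θ)) := by
  obtain ⟨L, hL⟩ := exists_linearIsometryEquiv_greatCircle hx hw hxw (φ + θ)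
  rw [← toSphere_separators_map L, hL, hL, separators_comm, add_sub_cancel_left, sub_self,
    greatCircle_zero]

lemma measurableSet_setOf_mem_separators_greatCircle (x w : E) (θ : ℝ) :
    MeasurableSet {p : ℝ × sphere (0 : E) 1 |
      p.2 ∈ separators (greatCircle x w p.1) (greatCircle x w (p.1 + θ))} := by
  simp only [separators, inner_greatCircle, mem_ofPred_eq]
  exact measurableSet_lt (by fun_prop) (by fun_prop)

lemma pi_mul_toSphere_separators_greatCircle (hx : ‖x‖ = 1) (hw : ‖w‖ = 1) (hxw : ⟪x, w⟫ = 0)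
    {θ : ℝ} (hθ₀ : 0 ≤ θ) (hθ : θ ≤ Real.pi) :
    ENNReal.ofReal Real.pi *
        (volume : Measure E).toSphere (separators x (greatCircle x w θ)) =
      ENNReal.ofReal θ * (volume : Measure E).toSphere univ := by
  set σ := (volume : Measure E).toSphere
  have hmeas := measurableSet_setOf_mem_separators_greatCircle x w θ
  have hslice (φ : ℝ) : σ (separators (greatCircle x w φ) (greatCircle x w (φ + θ))) =
      σ (separators x (greatCircle x w θ)) := toSphere_separators_greatCircle_add hx hw hxw φ θ
  have hx₀ : x ≠ 0 := by rw [← norm_ne_zero_iff, hx]; exact one_ne_zero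
  have hslice' : ∀ᵐ u ∂σ, volume.restrict (Ioc 0 Real.pi)
      {φ | u ∈ separators (greatCircle x w φ) (greatCircle x w (φ + θ))} = ENNReal.ofReal θ := by
    filter_upwards [ae_toSphere_inner_ne_zero (volume : Measure E) hx₀] with u hu
    rw [Measure.restrict_apply' measurableSet_Ioc,
      volume_setOf_mem_separators_greatCircle hθ₀ hθ hu]
  calc ENNReal.ofReal Real.pi * σ (separators x (greatCircle x w θ))
      = ((volume.restrict (Ioc 0 Real.pi)).prod σ) {p : ℝ × sphere (0 : E) 1 |
          p.2 ∈ separators (greatCircle x w p.1) (greatCircle x w (p.1 + θ))} := by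
        rw [Measure.prod_apply hmeas]
        simp only [preimage_ofPred_eq, ofPred_mem_eq, hslice]
        rw [lintegral_const, Measure.restrict_apply_univ, Real.volume_Ioc, sub_zero, mul_comm]
    _ = ENNReal.ofReal θ * σ univ := by
        rw [Measure.prod_apply_symm hmeas, ← lintegral_const]
        exact lintegral_congr_ae hslice'

lemma toSphere_separators_smul_of_neg (hx : x ≠ 0) {r : ℝ} (hr : r < 0) :
    (volume : Measure E).toSphere (separators x (r • x)) =
      (volume : Measure E).toSphere univ := by
  refine measure_congr (Filter.eventuallyEq_univ.2 ?_)
  filter_upwards [ae_toSphere_inner_ne_zero (volume : Measure E) hx] with u hu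
  rw [separators, mem_ofPred_eq, real_inner_smul_left, mul_left_comm]
  exact mul_neg_of_neg_of_pos hr (mul_self_pos.2 hu)

lemma pi_mul_toSphere_separators (hx : ‖x‖ = 1) (hy : ‖y‖ = 1) :
    ENNReal.ofReal Real.pi * (volume : Measure E).toSphere (separators x y) =
      ENNReal.ofReal (InnerProductGeometry.angle x y) * (volume : Measure E).toSphere univ := by
  by_cases hsin : Real.sin (InnerProductGeometry.angle x y) = 0
  · rcases InnerProductGeometry.sin_eq_zero_iff_angle_eq_zero_or_angle_eq_pi.1 hsin with h | h
    · obtain ⟨_, r, hr, rfl⟩ := InnerProductGeometry.angle_eq_zero_iff.1 h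
      rw [h, separators_smul_of_pos x hr, measure_empty, ENNReal.ofReal_zero, mul_zero, zero_mul]
    · obtain ⟨hx₀, r, hr, rfl⟩ := InnerProductGeometry.angle_eq_pi_iff.1 h
      rw [h, toSphere_separators_smul_of_neg hx₀ hr]
  · obtain ⟨w, hw, hxw, hwy⟩ := exists_greatCircle_angle_eq hx hy hsin
    have := pi_mul_toSphere_separators_greatCircle hx hw hxw
      (InnerProductGeometry.angle_nonneg x y) (InnerProductGeometry.angle_le_pi x y)
    rwa [hwy] at this

end Separators

section Angle

variable {E : Type*} [NormedAddCommGroup E] [InnerProductSpace ℝ E] {x y : E}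

lemma dist_eq_two_mul_sin_half_angle (hx : ‖x‖ = 1) (hy : ‖y‖ = 1) :
    dist x y = 2 * Real.sin (InnerProductGeometry.angle x y / 2) := by
  have hsin : 0 ≤ Real.sin (InnerProductGeometry.angle x y / 2) :=
    Real.sin_nonneg_of_nonneg_of_le_pi (by linarith [InnerProductGeometry.angle_nonneg x y])
      (by linarith [InnerProductGeometry.angle_le_pi x y, Real.pi_pos])
  rw [← sq_eq_sq₀ dist_nonneg (mul_nonneg zero_le_two hsin), dist_eq_norm, norm_sub_sq_real, hx,
    hy, InnerProductGeometry.inner_eq_cos_angle_of_norm_eq_one hx hy, mul_pow,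
    Real.sin_sq_eq_half_sub, mul_div_cancel₀ _ two_ne_zero]
  ring

lemma dist_le_angle (hx : ‖x‖ = 1) (hy : ‖y‖ = 1) :
    dist x y ≤ InnerProductGeometry.angle x y := by
  have hsin : Real.sin (InnerProductGeometry.angle x y / 2) ≤ InnerProductGeometry.angle x y / 2 :=
    Real.sin_le (div_nonneg (InnerProductGeometry.angle_nonneg x y) zero_le_two)
  linarith [dist_eq_two_mul_sin_half_angle hx hy]

lemma angle_le_two_mul_dist (hx : ‖x‖ = 1) (hy : ‖y‖ = 1) :
    InnerProductGeometry.angle x y ≤ 2 * dist x y := by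
  have hjordan : 2 / Real.pi * (InnerProductGeometry.angle x y / 2) ≤
      Real.sin (InnerProductGeometry.angle x y / 2) :=
    Real.mul_le_sin (by linarith [InnerProductGeometry.angle_nonneg x y])
      (by linarith [InnerProductGeometry.angle_le_pi x y])
  have hpi : 1 / 2 ≤ 2 / Real.pi := by
    rw [div_le_div_iff₀ two_pos Real.pi_pos]
    linarith [Real.pi_le_four]
  nlinarith [dist_eq_two_mul_sin_half_angle hx hy, InnerProductGeometry.angle_nonneg x y]

lemma one_sub_dist_sq_mul_angle_le_dist (hx : ‖x‖ = 1) (hy : ‖y‖ = 1) :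
    (1 - dist x y ^ 2) * InnerProductGeometry.angle x y ≤ dist x y := by
  have hθ₀ : 0 ≤ InnerProductGeometry.angle x y := InnerProductGeometry.angle_nonneg x y
  have hsq : InnerProductGeometry.angle x y ^ 2 ≤ (2 * dist x y) ^ 2 :=
    pow_le_pow_left₀ hθ₀ (angle_le_two_mul_dist hx hy) 2
  have hdist := dist_eq_two_mul_sin_half_angle hx hy
  set θ := InnerProductGeometry.angle x y
  rcases hθ₀.eq_or_lt with hθ | hθ
  · simp [← hθ]
  · have hcube : θ / 2 - (θ / 2) ^ 3 / 6 < Real.sin (θ / 2) := Real.sin_gt_sub_cube (half_pos hθ)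
    nlinarith [mul_le_mul_of_nonneg_right hsq hθ₀, mul_nonneg (sq_nonneg (dist x y)) hθ₀]

end Angle

section SignChanges

/-- The indices at which the sequence `f` changes sign; a zero of `f` does not count as a sign
change. -/
def signChanges (f : ℕ → ℝ) : Set ℕ := {i | f i * f (i + 1) < 0}

lemma exists_mem_signChanges_of_mul_neg {f : ℕ → ℝ} (hf : ∀ i, f i ≠ 0) {i j : ℕ}
    (hij : f i * f j < 0) : ∃ l ∈ signChanges f, l ∈ uIcc i j := by
  wlog hle : i ≤ j generalizing i j
  · rw [uIcc_comm]
    exact this (by rwa [mul_comm]) (le_of_not_ge hle)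
  rw [uIcc_of_le hle]
  by_contra! hconst
  have hpos : ∀ k, i ≤ k → k ≤ j → 0 < f i * f k := by
    intro k hik
    induction k, hik using Nat.le_induction with
    | base => exact fun _ => mul_self_pos.2 (hf i)
    | succ k hik ih =>
      intro hkj
      have hstep : 0 < f k * f (k + 1) :=
        (mul_ne_zero (hf k) (hf (k + 1))).lt_of_le'
          (not_lt.1 fun h => hconst k h ⟨hik, k.le_succ.trans hkj⟩)
      have hprod : 0 < f k * f k * (f i * f (k + 1)) :=
        calc 0 < f i * f k * (f k * f (k + 1)) := mul_pos (ih (k.le_succ.trans hkj)) hstep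
          _ = f k * f k * (f i * f (k + 1)) := by ring
      exact (mul_pos_iff_of_pos_left (mul_self_pos.2 (hf k))).1 hprod
  exact hij.not_gt (hpos j hle le_rfl)

lemma exists_mem_Ioo_eq_zero_of_mul_neg {f : ℝ → ℝ} {a b : ℝ} (hab : a ≤ b)
    (hf : ContinuousOn f (Icc a b)) (hneg : f a * f b < 0) : ∃ z ∈ Ioo a b, f z = 0 := by
  rcases mul_neg_iff.1 hneg with ⟨ha, hb⟩ | ⟨ha, hb⟩
  · exact intermediate_value_Ioo' hab hf ⟨hb, ha⟩
  · exact intermediate_value_Ioo hab hf ⟨ha, hb⟩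

lemma encard_signChanges_comp_le {f : ℝ → ℝ} {a b : ℝ} (hf : ContinuousOn f (Icc a b))
    {p : ℕ → ℝ} (hp : Monotone p) (hpab : ∀ i, p i ∈ Icc a b) :
    (signChanges (f ∘ p)).encard ≤ {t ∈ Ioo a b | f t = 0}.encard := by
  have hzero (i : ℕ) (hi : i ∈ signChanges (f ∘ p)) : ∃ z ∈ Ioo (p i) (p (i + 1)), f z = 0 :=
    exists_mem_Ioo_eq_zero_of_mul_neg (hp i.le_succ)
      (hf.mono (Icc_subset_Icc (hpab i).1 (hpab (i + 1)).2)) hi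
  choose! z hz hfz using hzero
  have hmono : StrictMonoOn z (signChanges (f ∘ p)) := fun i hi j hj hij =>
    ((hz i hi).2.trans_le (hp hij)).trans (hz j hj).1
  rw [← hmono.injOn.encard_image]
  refine encard_le_encard ?_
  rintro _ ⟨i, hi, rfl⟩
  exact ⟨Ioo_subset_Ioo (hpab i).1 (hpab (i + 1)).2 (hz i hi), hfz i hi⟩

end SignChanges

section Counting

lemma toENNReal_encard_le_of_forall_finset_card_le {α : Type*} {s : Set α} {c : ℝ≥0∞}
    (h : ∀ F : Finset α, ↑F ⊆ s → (F.card : ℝ≥0∞) ≤ c) : (s.encard : ℝ≥0∞) ≤ c := by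
  rw [← ENNReal.tsum_set_one, ENNReal.tsum_eq_iSup_sum]
  exact iSup_le fun F => by simpa using h (F.map (Function.Embedding.subtype _)) (by simp)

variable {α ι : Type*} {A : ι → Set α}

lemma encard_setOf_mem_eq_tsum_indicator (A : ι → Set α) (x : α) :
    ({i | x ∈ A i}.encard : ℝ≥0∞) = ∑' i, (A i).indicator 1 x := by
  rw [← ENNReal.tsum_set_one, tsum_subtype {i | x ∈ A i} fun _ => (1 : ℝ≥0∞)]
  rfl

variable [MeasurableSpace α] [Countable ι]

lemma measurable_encard_setOf_mem (hA : ∀ i, MeasurableSet (A i)) :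
    Measurable fun x => ({i | x ∈ A i}.encard : ℝ≥0∞) := by
  simp only [encard_setOf_mem_eq_tsum_indicator]
  exact Measurable.tsum fun i => measurable_one.indicator (hA i)

lemma lintegral_encard_setOf_mem (μ : Measure α) (hA : ∀ i, MeasurableSet (A i)) :
    ∫⁻ x, ({i | x ∈ A i}.encard : ℝ≥0∞) ∂μ = ∑' i, μ (A i) := by
  simp only [encard_setOf_mem_eq_tsum_indicator]
  rw [lintegral_tsum fun i => (measurable_one.indicator (hA i)).aemeasurable]
  exact tsum_congr fun i => lintegral_indicator_one (hA i)

end Counting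

section Grid

open Filter Topology NNReal

/-- The partition of `Icc a b` with mesh `1 / (N + 1)`, as an infinite sequence that remains at `b`
once it has arrived there. -/
def gridPoint (a b : ℝ) (N i : ℕ) : ℝ := min b (a + i / (N + 1))

variable {a b : ℝ}

lemma gridPoint_mono (a b : ℝ) (N : ℕ) : Monotone (gridPoint a b N) := fun i j hij => by
  unfold gridPoint
  gcongr

lemma gridPoint_mem_Icc (hab : a ≤ b) (N i : ℕ) : gridPoint a b N i ∈ Icc a b :=
  ⟨le_min hab (le_add_of_nonneg_right (by positivity)), min_le_left _ _⟩

lemma dist_gridPoint_succ_le (a b : ℝ) (N i : ℕ) :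
    dist (gridPoint a b N i) (gridPoint a b N (i + 1)) ≤ 1 / (N + 1) := by
  refine (abs_min_sub_min_le_max _ _ _ _).trans (max_le ?_ (le_of_eq ?_))
  · rw [sub_self, abs_zero]
    positivity
  · have hstep : a + i / (N + 1) - (a + (i + 1 : ℕ) / (N + 1)) = -(1 / (N + 1) : ℝ) := by
      push_cast
      ring
    rw [hstep, abs_neg, abs_of_pos (by positivity)]

lemma tendsto_gridPoint_floor {t : ℝ} (ht : t ∈ Icc a b) :
    Tendsto (fun N : ℕ => gridPoint a b N ⌊(t - a) * (N + 1)⌋₊) atTop (𝓝 t) := by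
  have hscale : Tendsto (fun N : ℕ => (N : ℝ) + 1) atTop atTop :=
    tendsto_atTop_add_const_right _ 1 tendsto_natCast_atTop_atTop
  have hfloor := (tendsto_nat_floor_mul_div_atTop (sub_nonneg.2 ht.1)).comp hscale
  simpa [gridPoint, ht.2] using (tendsto_const_nhds (x := b)).min (hfloor.const_add a)

variable {f : ℝ → ℝ}

lemma eventually_exists_mem_signChanges_gridPoint (hf : ContinuousOn f (Icc a b))
    (hgrid : ∀ N i, f (gridPoint a b N i) ≠ 0) {U : Set ℝ} (hU : IsOpen U) [U.OrdConnected]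
    {r s : ℝ} (hr : r ∈ Icc a b ∩ U) (hs : s ∈ Icc a b ∩ U) (hfr : f r < 0) (hfs : 0 < f s) :
    ∀ᶠ N in atTop, ∃ i ∈ signChanges (f ∘ gridPoint a b N), gridPoint a b N i ∈ U := by
  have hmem (N i : ℕ) : gridPoint a b N i ∈ Icc a b := gridPoint_mem_Icc (hr.1.1.trans hr.1.2) N i
  have hlim {t : ℝ} (ht : t ∈ Icc a b) :
      Tendsto (fun N : ℕ => f (gridPoint a b N ⌊(t - a) * (N + 1)⌋₊)) atTop (𝓝 (f t)) :=
    (hf t ht).tendsto.comp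
      (tendsto_nhdsWithin_iff.2 ⟨tendsto_gridPoint_floor ht, .of_forall fun N => hmem N _⟩)
  filter_upwards [(tendsto_gridPoint_floor hr.1).eventually_mem (hU.mem_nhds hr.2),
    (tendsto_gridPoint_floor hs.1).eventually_mem (hU.mem_nhds hs.2),
    (hlim hr.1).eventually_lt_const hfr, (hlim hs.1).eventually_const_lt hfs]
    with N hrU hsU hneg hpos
  obtain ⟨l, hl, hluIcc⟩ :=
    exists_mem_signChanges_of_mul_neg (f := f ∘ gridPoint a b N) (hgrid N)
      (mul_neg_of_neg_of_pos hneg hpos)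
  exact ⟨l, hl, OrdConnected.uIcc_subset ‹_› hrU hsU
    ((gridPoint_mono a b N).image_uIcc_subset (mem_image_of_mem _ hluIcc))⟩

lemma eventually_card_le_encard_signChanges_gridPoint (hf : ContinuousOn f (Icc a b))
    (hgrid : ∀ N i, f (gridPoint a b N i) ≠ 0)
    (hneg : ∀ t ∈ Icc a b, f t = 0 → ∃ᶠ r in 𝓝[Icc a b] t, f r < 0)
    (hpos : ∀ t ∈ Icc a b, f t = 0 → ∃ᶠ r in 𝓝[Icc a b] t, 0 < f r)
    {F : Finset ℝ} (hF : ↑F ⊆ {t ∈ Icc a b | f t = 0}) :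
    ∀ᶠ N in atTop, (F.card : ℕ∞) ≤ (signChanges (f ∘ gridPoint a b N)).encard := by
  obtain ⟨U, hU, hdisj⟩ := F.finite_toSet.t2_separation
  have hnear (t : ℝ) (ht : t ∈ F) :
      ∀ᶠ N in atTop, ∃ i ∈ signChanges (f ∘ gridPoint a b N), gridPoint a b N i ∈ U t := by
    obtain ⟨htab, hzero⟩ := hF ht
    obtain ⟨ε, hε, hball⟩ := Metric.isOpen_iff.1 (hU t).2 t (hU t).1
    have hnhds : ∀ᶠ r in 𝓝[Icc a b] t, r ∈ Icc a b ∩ ball t ε :=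
      inter_mem_nhdsWithin _ (ball_mem_nhds t hε)
    obtain ⟨r, hfr, hr⟩ := ((hneg t htab hzero).and_eventually hnhds).exists
    obtain ⟨s, hfs, hs⟩ := ((hpos t htab hzero).and_eventually hnhds).exists
    have : (ball t ε).OrdConnected := (convex_ball t ε).ordConnected
    filter_upwards [eventually_exists_mem_signChanges_gridPoint hf hgrid isOpen_ball hr hs hfr hfs]
      with N ⟨i, hi, hiball⟩
    exact ⟨i, hi, hball hiball⟩
  filter_upwards [F.eventually_all.2 hnear] with N hN
  choose! i hi hiU using hN
  have hinj : InjOn i F := fun t ht t' ht' heq =>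
    hdisj.elim_set ht ht' (gridPoint a b N (i t)) (hiU t ht) (heq ▸ hiU t' ht')
  rw [← encard_coe_eq_coe_finsetCard, ← hinj.encard_image]
  exact encard_le_encard (image_subset_iff.2 hi)

lemma encard_zeros_le_liminf_encard_signChanges (hf : ContinuousOn f (Icc a b))
    (hgrid : ∀ N i, f (gridPoint a b N i) ≠ 0)
    (hneg : ∀ t ∈ Icc a b, f t = 0 → ∃ᶠ r in 𝓝[Icc a b] t, f r < 0)
    (hpos : ∀ t ∈ Icc a b, f t = 0 → ∃ᶠ r in 𝓝[Icc a b] t, 0 < f r) :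
    ({t ∈ Icc a b | f t = 0}.encard : ℝ≥0∞) ≤
      liminf (fun N => ((signChanges (f ∘ gridPoint a b N)).encard : ℝ≥0∞)) atTop :=
  toENNReal_encard_le_of_forall_finset_card_le fun F hF => le_liminf_of_le (by isBoundedDefault) <|
    (eventually_card_le_encard_signChanges_gridPoint hf hgrid hneg hpos hF).mono fun N hN => by
      simpa using ENat.toENNReal_le.2 hN

end Grid

section Length

open Filter Topology NNReal

variable {E : Type*} [NormedAddCommGroup E] [InnerProductSpace ℝ E] {γ : ℝ → E}

lemma exists_forall_mul_tsum_angle_le_eVariationOn {s : Set ℝ} (hs : IsCompact s)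
    (hγ : ContinuousOn γ s) (hnorm : ∀ t ∈ s, ‖γ t‖ = 1) {c : ℝ≥0} (hc : c < 1) :
    ∃ η > 0, ∀ p : ℕ → ℝ, Monotone p → (∀ i, p i ∈ s) → (∀ i, dist (p i) (p (i + 1)) < η) →
      c * ∑' i, ENNReal.ofReal (InnerProductGeometry.angle (γ (p i)) (γ (p (i + 1)))) ≤
        eVariationOn γ s := by
  obtain ⟨η, hη, hdist⟩ := Metric.uniformContinuousOn_iff.1
    (hs.uniformContinuousOn_of_continuous hγ) √(1 - c) (Real.sqrt_pos.2 (sub_pos.2 hc))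
  refine ⟨η, hη, fun p hp hps hmesh => ?_⟩
  have hstep (i : ℕ) :
      c * ENNReal.ofReal (InnerProductGeometry.angle (γ (p i)) (γ (p (i + 1)))) ≤
        edist (γ (p (i + 1))) (γ (p i)) := by
    have hsq : dist (γ (p i)) (γ (p (i + 1))) ^ 2 ≤ 1 - c :=
      (Real.lt_sqrt dist_nonneg).1 (hdist _ (hps i) _ (hps (i + 1)) (hmesh i)) |>.le
    rw [edist_comm, edist_dist, ← ENNReal.ofReal_coe_nnreal, ← ENNReal.ofReal_mul c.coe_nonneg]
    refine ENNReal.ofReal_le_ofReal (le_trans ?_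
      (one_sub_dist_sq_mul_angle_le_dist (hnorm _ (hps i)) (hnorm _ (hps (i + 1)))))
    exact mul_le_mul_of_nonneg_right (by linarith) (InnerProductGeometry.angle_nonneg _ _)
  rw [← ENNReal.tsum_mul_left]
  exact ENNReal.tsum_le_of_sum_range_le fun n =>
    (Finset.sum_le_sum fun i _ => hstep i).trans (eVariationOn.sum_le hp hps)

lemma liminf_tsum_angle_gridPoint_le_eVariationOn {a b : ℝ} (hab : a ≤ b)
    (hγ : ContinuousOn γ (Icc a b)) (hnorm : ∀ t ∈ Icc a b, ‖γ t‖ = 1) :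
    liminf (fun N => ∑' i, ENNReal.ofReal (InnerProductGeometry.angle
      (γ (gridPoint a b N i)) (γ (gridPoint a b N (i + 1))))) atTop ≤
      eVariationOn γ (Icc a b) := by
  refine ENNReal.le_of_forall_lt_one_mul_le fun c hc => ?_
  lift c to ℝ≥0 using hc.ne_top
  obtain ⟨η, hη, hfine⟩ := exists_forall_mul_tsum_angle_le_eVariationOn isCompact_Icc hγ hnorm
    (ENNReal.coe_lt_one_iff.1 hc)
  rw [← ENNReal.liminf_const_mul_of_ne_top ENNReal.coe_ne_top]
  refine liminf_le_of_frequently_le' (Eventually.frequently ?_)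
  filter_upwards [tendsto_one_div_add_atTop_nhds_zero_nat.eventually_lt_const hη] with N hN
  exact hfine _ (gridPoint_mono a b N) (gridPoint_mem_Icc hab N) fun i =>
    (dist_gridPoint_succ_le a b N i).trans_lt hN

end Length

section Crofton

open Filter Topology

variable {E : Type*} [NormedAddCommGroup E] [InnerProductSpace ℝ E]
  [MeasurableSpace E] [BorelSpace E]

lemma measurable_encard_signChanges_inner (x : ℕ → E) :
    Measurable fun u : sphere (0 : E) 1 =>
      ((signChanges fun i => ⟪x i, (u : E)⟫).encard : ℝ≥0∞) :=
  measurable_encard_setOf_mem fun i => measurableSet_separators (x i) (x (i + 1))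

variable [FiniteDimensional ℝ E]

lemma pi_mul_lintegral_encard_signChanges_inner {x : ℕ → E} (hx : ∀ i, ‖x i‖ = 1) :
    ENNReal.ofReal Real.pi * ∫⁻ u : sphere (0 : E) 1,
        ((signChanges fun i => ⟪x i, (u : E)⟫).encard : ℝ≥0∞) ∂(volume : Measure E).toSphere =
      (∑' i, ENNReal.ofReal (InnerProductGeometry.angle (x i) (x (i + 1)))) *
        (volume : Measure E).toSphere univ := by
  have hcount := lintegral_encard_setOf_mem (volume : Measure E).toSphere
    fun i => measurableSet_separators (x i) (x (i + 1))
  rw [← ENNReal.tsum_mul_right]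
  simp only [← pi_mul_toSphere_separators (hx _) (hx _)]
  rw [ENNReal.tsum_mul_left, ← hcount]
  rfl

variable {γ : ℝ → E} {a b : ℝ}

lemma eVariationOn_mul_toSphere_le (hγ : ContinuousOn γ (Icc a b))
    (hnorm : ∀ t ∈ Icc a b, ‖γ t‖ = 1) :
    eVariationOn γ (Icc a b) * (volume : Measure E).toSphere univ ≤
      ENNReal.ofReal Real.pi * ∫⁻ u : sphere (0 : E) 1,
        ({t ∈ Ioo a b | ⟪γ t, (u : E)⟫ = 0}.encard : ℝ≥0∞) ∂(volume : Measure E).toSphere := by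
  rw [eVariationOn, ENNReal.iSup_mul]
  refine iSup_le fun ⟨n, p, hp, hpab⟩ => ?_
  have hdist (i : ℕ) : edist (γ (p (i + 1))) (γ (p i)) ≤
      ENNReal.ofReal (InnerProductGeometry.angle (γ (p i)) (γ (p (i + 1)))) := by
    rw [edist_comm, edist_dist]
    exact ENNReal.ofReal_le_ofReal (dist_le_angle (hnorm _ (hpab i)) (hnorm _ (hpab (i + 1))))
  calc (∑ i ∈ Finset.range n, edist (γ (p (i + 1))) (γ (p i))) * (volume : Measure E).toSphere univ
      ≤ (∑' i, ENNReal.ofReal (InnerProductGeometry.angle (γ (p i)) (γ (p (i + 1))))) *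
          (volume : Measure E).toSphere univ := by
        gcongr
        exact (Finset.sum_le_sum fun i _ => hdist i).trans (ENNReal.sum_le_tsum _)
    _ = ENNReal.ofReal Real.pi * ∫⁻ u : sphere (0 : E) 1,
          ((signChanges fun i => ⟪γ (p i), (u : E)⟫).encard : ℝ≥0∞)
          ∂(volume : Measure E).toSphere :=
        (pi_mul_lintegral_encard_signChanges_inner fun i => hnorm _ (hpab i)).symm
    _ ≤ _ := by
        gcongr with u
        exact encard_signChanges_comp_le (f := fun t => ⟪γ t, (u : E)⟫)
          (hγ.inner continuousOn_const) hp hpab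

lemma ae_encard_zeros_le_liminf_encard_signChanges (hab : a ≤ b) (hγ : ContinuousOn γ (Icc a b))
    (hγ₀ : ∀ t ∈ Icc a b, γ t ≠ 0) :
    ∀ᵐ u : sphere (0 : E) 1 ∂(volume : Measure E).toSphere,
      ({t ∈ Icc a b | ⟪γ t, (u : E)⟫ = 0}.encard : ℝ≥0∞) ≤ liminf (fun N =>
        ((signChanges fun i => ⟪γ (gridPoint a b N i), (u : E)⟫).encard : ℝ≥0∞)) atTop := by
  have hgrid : ∀ᵐ u : sphere (0 : E) 1 ∂(volume : Measure E).toSphere,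
      ∀ N i, ⟪γ (gridPoint a b N i), (u : E)⟫ ≠ 0 :=
    ae_all_iff.2 fun N => ae_all_iff.2 fun i =>
      ae_toSphere_inner_ne_zero volume (hγ₀ _ (gridPoint_mem_Icc hab N i))
  filter_upwards [hgrid, ae_toSphere_forall_frequently_inner_neg volume hγ₀,
    ae_toSphere_forall_frequently_inner_pos volume hγ₀] with u hu hneg hpos
  exact encard_zeros_le_liminf_encard_signChanges (hγ.inner continuousOn_const) hu hneg hpos

lemma le_eVariationOn_mul_toSphere (hγ : ContinuousOn γ (Icc a b))
    (hnorm : ∀ t ∈ Icc a b, ‖γ t‖ = 1) :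
    ENNReal.ofReal Real.pi * ∫⁻ u : sphere (0 : E) 1,
        ({t ∈ Icc a b | ⟪γ t, (u : E)⟫ = 0}.encard : ℝ≥0∞) ∂(volume : Measure E).toSphere ≤
      eVariationOn γ (Icc a b) * (volume : Measure E).toSphere univ := by
  rcases lt_or_ge b a with hba | hab
  · simp [Icc_eq_empty_of_lt hba]
  set σ := (volume : Measure E).toSphere
  have hγ₀ (t : ℝ) (ht : t ∈ Icc a b) : γ t ≠ 0 :=
    norm_ne_zero_iff.1 ((hnorm t ht).trans_ne one_ne_zero)
  calc ENNReal.ofReal Real.pi *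
        ∫⁻ u : sphere (0 : E) 1, ({t ∈ Icc a b | ⟪γ t, (u : E)⟫ = 0}.encard : ℝ≥0∞) ∂σ
      ≤ ENNReal.ofReal Real.pi * liminf (fun N => ∫⁻ u : sphere (0 : E) 1,
          ((signChanges fun i => ⟪γ (gridPoint a b N i), (u : E)⟫).encard : ℝ≥0∞) ∂σ) atTop := by
        gcongr
        exact (lintegral_mono_ae (ae_encard_zeros_le_liminf_encard_signChanges hab hγ hγ₀)).trans
          (lintegral_liminf_le fun N => measurable_encard_signChanges_inner _)
    _ = σ univ * liminf (fun N => ∑' i, ENNReal.ofReal (InnerProductGeometry.angle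
          (γ (gridPoint a b N i)) (γ (gridPoint a b N (i + 1))))) atTop := by
        rw [← ENNReal.liminf_const_mul_of_ne_top ENNReal.ofReal_ne_top,
          ← ENNReal.liminf_mul_const_of_ne_top (measure_ne_top σ univ)]
        exact congrArg (liminf · atTop) (funext fun N => pi_mul_lintegral_encard_signChanges_inner
          fun i => hnorm _ (gridPoint_mem_Icc hab N i))
    _ ≤ eVariationOn γ (Icc a b) * σ univ := by
        rw [mul_comm]
        gcongr
        exact liminf_tsum_angle_gridPoint_le_eVariationOn hab hγ hnorm

end Crofton

theorem spherical_crofton_general {E : Type*} [NormedAddCommGroup E] [InnerProductSpace ℝ E]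
    [FiniteDimensional ℝ E] [MeasurableSpace E] [BorelSpace E] {γ : ℝ → E} {a b : ℝ} {J : Set ℝ}
    (hγ : ContinuousOn γ (Icc a b)) (hnorm : ∀ t ∈ Icc a b, ‖γ t‖ = 1) (hJ : Ioo a b ⊆ J)
    (hJ' : J ⊆ Icc a b) :
    eVariationOn γ (Icc a b) * (volume : Measure E).toSphere univ =
      ENNReal.ofReal Real.pi * ∫⁻ u : sphere (0 : E) 1,
        ({t ∈ J | ⟪γ t, (u : E)⟫ = 0}.encard : ℝ≥0∞) ∂(volume : Measure E).toSphere := by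
  apply le_antisymm
  · refine (eVariationOn_mul_toSphere_le hγ hnorm).trans ?_
    gcongr
  · refine le_trans ?_ (le_eVariationOn_mul_toSphere hγ hnorm)
    gcongr

/-- **Crofton formula on the sphere.** The length of a closed
rectifiable curve on the unit sphere `S² ⊆ ℝ³` equals `π` times the average,
over the uniform (normalized) measure on unit vectors `u`, of the number of
intersections of the curve with the great circle `u^⊥ ∩ S²`, i.e. the number of
zeros of `t ↦ ⟪γ t, u⟫` on one period. Equivalently (clearing the normalization),
`length(γ) · σ(S²) = π · ∫ n(u) dσ(u)` for the uniform measure `σ` on `S²`. -/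
theorem spherical_crofton
    (γ : ℝ → EuclideanSpace ℝ (Fin 3))
    (hγ : Continuous γ) (hper : Function.Periodic γ 1)
    (hsph : Set.range γ ⊆ sphere (0 : EuclideanSpace ℝ (Fin 3)) 1)
    (hrect : eVariationOn γ (Icc (0 : ℝ) 1) ≠ ⊤) :
    eVariationOn γ (Icc (0 : ℝ) 1) *
        (volume : Measure (EuclideanSpace ℝ (Fin 3))).toSphere univ =
      ENNReal.ofReal Real.pi *
        ∫⁻ u : sphere (0 : EuclideanSpace ℝ (Fin 3)) 1,
          (({t ∈ Ico (0 : ℝ) 1 | ⟪γ t, (u : EuclideanSpace ℝ (Fin 3))⟫ = 0}).encard :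
            ℝ≥0∞)
          ∂(volume : Measure (EuclideanSpace ℝ (Fin 3))).toSphere :=
  spherical_crofton_general hγ.continuousOn (fun t _ => by simpa using hsph (mem_range_self t))
    Ioo_subset_Ico_self Ico_subset_Icc_self
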